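/- Let f ∈ 𝒮(ℝ) be a Schwartz function and k, m, n ∈ ℤ with n ≠ 0. Then the series F(t,x,y,z) = Σ_{ξ∈ℤ} f(x+ξ)·e^{2πi(kt + (m+nξ)y + nz)} converges absolutely at every point of ℝ⁴ and defines a smooth KT-periodic function; moreover ∫_{[0,1]⁴} |F(t,x,y,z)|² dt dx dy dz = ∫_ℝ |f(x)|² dx. -/

import Mathlib

/-!
Since `F(t,x,y,z) = e^{2πi(kt + my + nz)} G(x, y)` with `G(x, y) = ∑ ξ, f(x + ξ) e^{2πi n ξ y}`,
everything reduces to the series `G`, called `zak n f` below.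

*Smoothness.* On bounded ranges of `x` the terms decay rapidly in `ξ`, uniformly in `x`
(`schwartz_translate_bound`), so the series may be differentiated once term by term. The partial
derivatives are `∂ₓ G_f = G_{f'}` and `∂_y G_f = 2πi n (G_{xf} - x G_f)` (`hasFDerivAt_zak`), and
`f'`, `x f` are Schwartz functions. Hence if `G_f` is `C^N` for all Schwartz `f`, it is `C^{N+1}`
for all Schwartz `f` (`contDiff_zak_nat`).

*Periodicity.* Integer translations of `t`, `y`, `z` change the phases by integers; under
`(x, z) ↦ (x + 1, z + y)` the series is reindexed by `ξ ↦ ξ + 1`.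

*Isometry.* `|F|` depends only on `(x, y)`. As `n ≠ 0`, the characters `y ↦ e^{2πi n ξ y}` are
orthonormal on `[0,1]`, so Parseval (`zak_parseval`) gives `∫ |G(x, y)|² dy = ∑ ξ, |f(x + ξ)|²`,
whose integral over `x ∈ [0,1]` is the integral of `|f|²` over the line (`integral_periodization`).
-/

open Complex MeasureTheory

noncomputable section

/-- Functions of four real variables `(t, x, y, z)` with complex values. -/
abbrev F4 : Type := ℝ → ℝ → ℝ → ℝ → ℂ

/-- Smoothness of a function of four real variables. -/
def Smooth4 (f : F4) : Prop :=
  ContDiff ℝ (⊤ : ℕ∞) (fun p : ℝ × ℝ × ℝ × ℝ => f p.1 p.2.1 p.2.2.1 p.2.2.2)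

/-- The invariance properties identifying smooth functions on `ℝ⁴` with smooth
functions on the Kodaira–Thurston manifold `KT⁴`. -/
def KTPeriodic (f : F4) : Prop :=
  ∀ t x y z : ℝ,
    f (t + 1) x y z = f t x y z ∧
    f t (x + 1) y (z + y) = f t x y z ∧
    f t x (y + 1) z = f t x y z ∧
    f t x y (z + 1) = f t x y z

/-- Partial derivative in `t`. -/
def pT (f : F4) (t x y z : ℝ) : ℂ := deriv (fun s => f s x y z) t
/-- Partial derivative in `x`. -/
def pX (f : F4) (t x y z : ℝ) : ℂ := deriv (fun s => f t s y z) x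
/-- Partial derivative in `y`. -/
def pY (f : F4) (t x y z : ℝ) : ℂ := deriv (fun s => f t x s z) y
/-- Partial derivative in `z`. -/
def pZ (f : F4) (t x y z : ℝ) : ℂ := deriv (fun s => f t x y s) z

/-- The vector field `V₁ = (1/2)(∂/∂t − i ∂/∂x)`. -/
def V₁ (f : F4) (t x y z : ℝ) : ℂ :=
  (1 / 2) * (pT f t x y z - Complex.I * pX f t x y z)

/-- The conjugate vector field `V̄₁ = (1/2)(∂/∂t + i ∂/∂x)`. -/
def V₁c (f : F4) (t x y z : ℝ) : ℂ :=
  (1 / 2) * (pT f t x y z + Complex.I * pX f t x y z)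

/-- The vector field `V₂ = (1/2)(∂/∂y + x ∂/∂z − ((a−i)/b) ∂/∂z)`. -/
def V₂ (a b : ℝ) (f : F4) (t x y z : ℝ) : ℂ :=
  (1 / 2) * (pY f t x y z + (x : ℂ) * pZ f t x y z -
    (((a : ℂ) - Complex.I) / (b : ℂ)) * pZ f t x y z)

/-- The conjugate vector field `V̄₂ = (1/2)(∂/∂y + x ∂/∂z − ((a+i)/b) ∂/∂z)`. -/
def V₂c (a b : ℝ) (f : F4) (t x y z : ℝ) : ℂ :=
  (1 / 2) * (pY f t x y z + (x : ℂ) * pZ f t x y z -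
    (((a : ℂ) + Complex.I) / (b : ℂ)) * pZ f t x y z)

/-- The space `𝒮(a,b)` of pairs `(f,g)` of smooth KT-periodic functions satisfying
`−V̄₂(f) + V̄₁(g) + (b/4)g = 0` and `V₁(f) + V₂(g) = 0`. -/
def Sol (a b : ℝ) : Set (F4 × F4) :=
  {fg | Smooth4 fg.1 ∧ Smooth4 fg.2 ∧ KTPeriodic fg.1 ∧ KTPeriodic fg.2 ∧
    (∀ t x y z : ℝ,
      -V₂c a b fg.1 t x y z + V₁c fg.2 t x y z + ((b : ℂ) / 4) * fg.2 t x y z = 0) ∧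
    (∀ t x y z : ℝ, V₁ fg.1 t x y z + V₂ a b fg.2 t x y z = 0)}

/-- `S` is a `ℂ`-subspace of dimension exactly `n`: there are `n` linearly independent
elements whose span is exactly `S`. -/
def HasDimOver {V : Type*} [AddCommGroup V] [Module ℂ V] (S : Set V) (n : ℕ) : Prop :=
  ∃ v : Fin n → V, LinearIndependent ℂ v ∧
    (Submodule.span ℂ (Set.range v) : Set V) = S

end

open MeasureTheory

/-! ### Decay of the translates of a Schwartz function -/

/-- On a bounded range of `x` the terms `f (x + ξ)`, even after multiplication by `1 + |ξ|`, are
dominated by a summable sequence independent of `x`. This local uniformity is all that the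
termwise differentiation and integration of the series need. -/
lemma schwartz_translate_bound (f : SchwartzMap ℝ ℂ) (R : ℝ) :
    ∃ u : ℤ → ℝ, Summable u ∧
      ∀ (ξ : ℤ) (x : ℝ), |x| ≤ R → (1 + |(ξ : ℝ)|) * ‖f (x + ξ)‖ ≤ u ξ := by
  obtain ⟨C, hC⟩ : ∃ C : ℝ, ∀ v : ℝ, (1 + |v|) ^ 3 * ‖f v‖ ≤ C :=
    ⟨_, fun v => by
      simpa using SchwartzMap.one_add_le_sup_seminorm_apply (𝕜 := ℝ) (m := (3, 0))
        (k := 3) (n := 0) le_rfl le_rfl f v⟩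
  refine ⟨fun ξ => (1 + |R|) ^ 3 * C * ((1 + |(ξ : ℝ)|) ^ 2)⁻¹, ?_, ?_⟩
  · apply Summable.mul_left
    have h : Summable fun j : ℕ => ((1 + (j : ℝ)) ^ 2)⁻¹ := by
      have := (summable_nat_add_iff 1).2 (Real.summable_nat_pow_inv.2 one_lt_two)
      simpa [add_comm] using this
    exact Summable.of_nat_of_neg (by simpa using h) (by simpa using h)
  · intro ξ x hx
    have h1 : 1 + |(ξ : ℝ)| ≤ (1 + |R|) * (1 + |x + ξ|) := by
      have h2 : |(ξ : ℝ)| ≤ |x + ξ| + |x| := by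
        simpa using abs_sub (x + (ξ : ℝ)) x
      have h3 : R ≤ |R| := le_abs_self R
      nlinarith [mul_nonneg (abs_nonneg R) (abs_nonneg (x + (ξ : ℝ)))]
    have h4 : (1 + |(ξ : ℝ)|) ^ 3 * ‖f (x + ξ)‖ ≤ (1 + |R|) ^ 3 * C := by
      calc (1 + |(ξ : ℝ)|) ^ 3 * ‖f (x + ξ)‖
          ≤ ((1 + |R|) * (1 + |x + ξ|)) ^ 3 * ‖f (x + ξ)‖ := by gcongr
        _ = (1 + |R|) ^ 3 * ((1 + |x + ξ|) ^ 3 * ‖f (x + ξ)‖) := by ring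
        _ ≤ (1 + |R|) ^ 3 * C := by gcongr; exact hC _
    change _ ≤ (1 + |R|) ^ 3 * C * ((1 + |(ξ : ℝ)|) ^ 2)⁻¹
    rw [← div_eq_mul_inv, le_div_iff₀ (by positivity)]
    linarith [h4]

lemma schwartz_translate_summable (f : SchwartzMap ℝ ℂ) (x : ℝ) :
    Summable fun ξ : ℤ => ‖f (x + ξ)‖ := by
  obtain ⟨u, hu, hb⟩ := schwartz_translate_bound f |x|
  refine Summable.of_nonneg_of_le (fun _ => norm_nonneg _) (fun ξ => ?_) hu
  refine le_trans ?_ (hb ξ x le_rfl)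
  nlinarith [norm_nonneg (f (x + ξ)), mul_nonneg (abs_nonneg (ξ : ℝ)) (norm_nonneg (f (x + ξ)))]

/-! ### The two-variable Weil–Brezin (Zak) series -/

/-- The character `y ↦ e^{2πi n ξ y}`. -/
noncomputable def zakChar (n ξ : ℤ) (y : ℝ) : ℂ :=
  Complex.exp (2 * (Real.pi : ℂ) * Complex.I * n * ξ * y)

/-- The part of the Weil–Brezin series depending on `(x, y)`: it is `∑ ξ, f (x + ξ) e^{2πi n ξ y}`,
so that the full series is `e^{2πi(kt + my + nz)}` times this one. -/
noncomputable def zak (n : ℤ) (f : SchwartzMap ℝ ℂ) (p : ℝ × ℝ) : ℂ :=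
  ∑' ξ : ℤ, f (p.1 + ξ) * zakChar n ξ p.2

@[simp] lemma norm_zakChar (n ξ : ℤ) (y : ℝ) : ‖zakChar n ξ y‖ = 1 := by
  have : (2 * (Real.pi : ℂ) * Complex.I * n * ξ * y) =
      ((2 * Real.pi * n * ξ * y : ℝ) : ℂ) * Complex.I := by push_cast; ring
  rw [zakChar, this, Complex.norm_exp_ofReal_mul_I]

lemma summable_zak (n : ℤ) (f : SchwartzMap ℝ ℂ) (x y : ℝ) :
    Summable fun ξ : ℤ => f (x + ξ) * zakChar n ξ y :=
  Summable.of_norm (by simpa using schwartz_translate_summable f x)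

lemma hasDerivAt_zakChar (n ξ : ℤ) (y : ℝ) :
    HasDerivAt (zakChar n ξ) (2 * (Real.pi : ℂ) * Complex.I * n * ξ * zakChar n ξ y) y := by
  have h : HasDerivAt (fun y : ℝ => 2 * (Real.pi : ℂ) * Complex.I * n * ξ * (y : ℂ))
      (2 * (Real.pi : ℂ) * Complex.I * n * ξ * 1) y :=
    (Complex.ofRealCLM.hasDerivAt (x := y)).const_mul _
  have h2 := h.cexp
  rw [mul_one, mul_comm (Complex.exp _)] at h2
  exact h2

/-- The Schwartz function `x ↦ x f(x)`. -/
noncomputable def mulX (f : SchwartzMap ℝ ℂ) : SchwartzMap ℝ ℂ :=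
  SchwartzMap.smulLeftCLM ℂ (fun x : ℝ => x) f

lemma mulX_apply (f : SchwartzMap ℝ ℂ) (x : ℝ) : mulX f x = (x : ℂ) * f x := by
  rw [mulX, SchwartzMap.smulLeftCLM_apply_apply (by fun_prop)]
  simp

/-- Both partial derivatives of `zak n f` are again built from series of the same kind:
`∂ₓ (zak f) = zak f'`, and `∂_y (zak f) = 2πi n (zak (x f) - x zak f)` because
`ξ f(x + ξ) = (x + ξ) f(x + ξ) - x f(x + ξ)`. -/
lemma hasFDerivAt_zak (n : ℤ) (f : SchwartzMap ℝ ℂ) (p : ℝ × ℝ) :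
    HasFDerivAt (zak n f)
      ((ContinuousLinearMap.fst ℝ ℝ ℝ).smulRight (zak n (SchwartzMap.derivCLM ℝ ℂ f) p) +
        (ContinuousLinearMap.snd ℝ ℝ ℝ).smulRight
          (2 * (Real.pi : ℂ) * Complex.I * n * (zak n (mulX f) p - (p.1 : ℂ) * zak n f p))) p := by
  obtain ⟨u, hu, hub⟩ := schwartz_translate_bound f (|p.1| + 1)
  obtain ⟨v, hv, hvb⟩ := schwartz_translate_bound (SchwartzMap.derivCLM ℝ ℂ f) (|p.1| + 1)
  obtain ⟨c, hc⟩ : ∃ c : ℂ, c = 2 * (Real.pi : ℂ) * Complex.I * n := ⟨_, rfl⟩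
  rw [← hc]
  let g' : ℤ → ℝ × ℝ → (ℝ × ℝ →L[ℝ] ℂ) := fun ξ q =>
    (ContinuousLinearMap.fst ℝ ℝ ℝ).smulRight
        (SchwartzMap.derivCLM ℝ ℂ f (q.1 + ξ) * zakChar n ξ q.2) +
      (ContinuousLinearMap.snd ℝ ℝ ℝ).smulRight
        (c * (ξ * (f (q.1 + ξ) * zakChar n ξ q.2)))
  have key : HasFDerivAt (fun q : ℝ × ℝ => ∑' ξ : ℤ, f (q.1 + ξ) * zakChar n ξ q.2)
      (∑' ξ : ℤ, g' ξ p) p := by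
    refine hasFDerivAt_tsum_of_isPreconnected (u := fun ξ => v ξ + ‖c‖ * u ξ)
      (s := Metric.ball p 1) (x₀ := p) (hv.add (hu.mul_left _)) Metric.isOpen_ball
      (convex_ball p 1).isPreconnected ?_ ?_ (Metric.mem_ball_self one_pos)
      (summable_zak n f p.1 p.2) (Metric.mem_ball_self one_pos)
    · intro ξ q _
      have h1 : HasFDerivAt (fun q : ℝ × ℝ => f (q.1 + ξ))
          ((ContinuousLinearMap.fst ℝ ℝ ℝ).smulRight (deriv f (q.1 + ξ))) q := by
        have := (f.hasDerivAt (q.1 + ξ)).hasFDerivAt.comp q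
          ((hasFDerivAt_fst (𝕜 := ℝ) (p := q)).add_const (ξ : ℝ))
        have e : (ContinuousLinearMap.fst ℝ ℝ ℝ).smulRight (deriv f (q.1 + ξ)) =
            (ContinuousLinearMap.toSpanSingleton ℝ (deriv f (q.1 + ξ))).comp
              (ContinuousLinearMap.fst ℝ ℝ ℝ) := by ext <;> simp
        rw [e]
        exact this
      have h2 : HasFDerivAt (fun q : ℝ × ℝ => zakChar n ξ q.2)
          ((ContinuousLinearMap.snd ℝ ℝ ℝ).smulRight (c * ξ * zakChar n ξ q.2)) q := by
        have := (hasDerivAt_zakChar n ξ q.2).hasFDerivAt.comp q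
          (hasFDerivAt_snd (𝕜 := ℝ) (p := q))
        have e : (ContinuousLinearMap.snd ℝ ℝ ℝ).smulRight (c * ξ * zakChar n ξ q.2) =
            (ContinuousLinearMap.toSpanSingleton ℝ (c * ξ * zakChar n ξ q.2)).comp
              (ContinuousLinearMap.snd ℝ ℝ ℝ) := by ext <;> simp
        rw [← hc] at this
        rw [e]
        exact this
      have e : g' ξ q = f (q.1 + ξ) •
            (ContinuousLinearMap.snd ℝ ℝ ℝ).smulRight (c * ξ * zakChar n ξ q.2) +
          zakChar n ξ q.2 • (ContinuousLinearMap.fst ℝ ℝ ℝ).smulRight (deriv f (q.1 + ξ)) := by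
        ext <;> simp [g', SchwartzMap.derivCLM_apply] <;> ring
      rw [e]
      exact h1.mul h2
    · intro ξ q hq
      have hq1 : |q.1| ≤ |p.1| + 1 := by
        have h1 : |q.1 - p.1| < 1 := lt_of_le_of_lt (norm_fst_le (q - p)) (mem_ball_iff_norm.1 hq)
        have h2 := abs_sub_abs_le_abs_sub q.1 p.1
        linarith
      have hu' := hub ξ q.1 hq1
      have hv' := hvb ξ q.1 hq1
      have hfst : ‖ContinuousLinearMap.fst ℝ ℝ ℝ‖ ≤ 1 := ContinuousLinearMap.norm_fst_le ..
      have hsnd : ‖ContinuousLinearMap.snd ℝ ℝ ℝ‖ ≤ 1 := ContinuousLinearMap.norm_snd_le ..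
      refine (norm_add_le _ _).trans (add_le_add ?_ ?_)
      · rw [ContinuousLinearMap.norm_smulRight_apply, norm_mul, norm_zakChar, mul_one]
        refine le_trans (mul_le_of_le_one_left (norm_nonneg _) hfst) (le_trans ?_ hv')
        exact le_mul_of_one_le_left (norm_nonneg _) (by simp)
      · rw [ContinuousLinearMap.norm_smulRight_apply]
        refine le_trans (mul_le_of_le_one_left (norm_nonneg _) hsnd) ?_
        rw [norm_mul, norm_mul, norm_mul, norm_zakChar, mul_one]
        refine mul_le_mul_of_nonneg_left (le_trans ?_ hu') (norm_nonneg _)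
        refine mul_le_mul_of_nonneg_right ?_ (norm_nonneg _)
        simp
  have hsum1 := (summable_zak n (SchwartzMap.derivCLM ℝ ℂ f) p.1 p.2).hasSum
  have hsum2 : HasSum (fun ξ : ℤ => c * (ξ * (f (p.1 + ξ) * zakChar n ξ p.2)))
      (c * (zak n (mulX f) p - (p.1 : ℂ) * zak n f p)) := by
    refine HasSum.mul_left c ?_
    have := (summable_zak n (mulX f) p.1 p.2).hasSum.sub
      ((summable_zak n f p.1 p.2).hasSum.mul_left (p.1 : ℂ))
    refine this.congr_fun fun ξ => ?_
    rw [mulX_apply]; push_cast; ring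
  have hsum : HasSum (fun ξ => g' ξ p) _ :=
    (hsum1.mapL (ContinuousLinearMap.smulRightL ℝ (ℝ × ℝ) ℂ (ContinuousLinearMap.fst ℝ ℝ ℝ))).add
      (hsum2.mapL (ContinuousLinearMap.smulRightL ℝ (ℝ × ℝ) ℂ (ContinuousLinearMap.snd ℝ ℝ ℝ)))
  rw [hsum.tsum_eq] at key
  exact key

/-- The quantifier over `f` stays inside the induction, because the derivative of `zak n f` involves
the series of `f'` and `x f`. -/
lemma contDiff_zak_nat (n : ℤ) (N : ℕ) : ∀ f : SchwartzMap ℝ ℂ, ContDiff ℝ N (zak n f) := by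
  induction N with
  | zero =>
    intro f
    exact contDiff_zero.2
      (continuous_iff_continuousAt.2 fun p => (hasFDerivAt_zak n f p).continuousAt)
  | succ N ih =>
    intro f
    refine contDiff_succ_iff_hasFDerivAt.2 ⟨_, ?_, hasFDerivAt_zak n f⟩
    have h1 := ih f
    have h2 := ih (mulX f)
    have h3 := ih (SchwartzMap.derivCLM ℝ ℂ f)
    have h4 : ContDiff ℝ N fun p : ℝ × ℝ => (p.1 : ℂ) :=
      Complex.ofRealCLM.contDiff.comp contDiff_fst
    exact (contDiff_const.smulRight h3).add
      (contDiff_const.smulRight (contDiff_const.mul (h2.sub (h4.mul h1))))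

/-! ### Parseval's identity and the isometry -/

lemma integral_zakChar (n : ℤ) (hn : n ≠ 0) (ξ : ℤ) :
    ∫ y in (0:ℝ)..1, zakChar n ξ y = if ξ = 0 then 1 else 0 := by
  split_ifs with h
  · simp [h, zakChar]
  · have hc : 2 * (Real.pi : ℂ) * Complex.I * n * ξ ≠ 0 := by
      simp [h, hn, Real.pi_ne_zero]
    simp only [zakChar]
    rw [integral_exp_mul_complex hc]
    have : Complex.exp (2 * (Real.pi : ℂ) * Complex.I * n * ξ * ((1 : ℝ) : ℂ)) = 1 :=
      Complex.exp_eq_one_iff.2 ⟨n * ξ, by push_cast; ring⟩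
    rw [this]; simp

/-- Parseval's identity for an absolutely convergent Fourier series with frequencies in `n ℤ`.
Injectivity of `ξ ↦ n ξ`, that is `n ≠ 0`, makes the characters orthonormal. -/
lemma zak_parseval (n : ℤ) (hn : n ≠ 0) (a : ℤ → ℂ) (ha : Summable fun ξ => ‖a ξ‖) :
    ∫ y in (0:ℝ)..1, ‖∑' ξ, a ξ * zakChar n ξ y‖ ^ 2 = ∑' ξ, ‖a ξ‖ ^ 2 := by
  have hcont : ∀ ξ, Continuous (zakChar n ξ) := fun ξ => by unfold zakChar; fun_prop
  have hconj : ∀ (ξ : ℤ) (y : ℝ), (starRingEnd ℂ) (zakChar n ξ y) = zakChar n (-ξ) y := by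
    intro ξ y
    simp only [zakChar, ← Complex.exp_conj, map_mul, Complex.conj_I, Complex.conj_ofReal,
      map_intCast, map_ofNat]
    congr 1; push_cast; ring
  have hmul : ∀ (ξ η : ℤ) (y : ℝ), zakChar n ξ y * zakChar n (-η) y = zakChar n (ξ - η) y := by
    intro ξ η y
    simp only [zakChar, ← Complex.exp_add]
    congr 1; push_cast; ring
  obtain ⟨b, hbdef⟩ : ∃ b : ℤ × ℤ → ℂ, ∀ q, b q = a q.1 * (starRingEnd ℂ) (a q.2) :=
    ⟨_, fun _ => rfl⟩
  have haconj : Summable fun ξ => ‖(starRingEnd ℂ) (a ξ)‖ := by simpa using ha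
  have hb : Summable fun q => ‖b q‖ := by
    simp only [hbdef]
    exact Summable.mul_norm (f := a) (g := fun ξ => (starRingEnd ℂ) (a ξ)) ha haconj
  -- The square of the modulus as an absolutely convergent double series.
  have hsq : ∀ y : ℝ, HasSum (fun q : ℤ × ℤ => b q * zakChar n (q.1 - q.2) y)
      ((‖∑' ξ, a ξ * zakChar n ξ y‖ ^ 2 : ℝ) : ℂ) := by
    intro y
    have h1 : Summable fun ξ => ‖a ξ * zakChar n ξ y‖ := by simpa using ha
    have h2 : Summable fun ξ => ‖(starRingEnd ℂ) (a ξ * zakChar n ξ y)‖ := by simpa using ha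
    have h3 := tsum_mul_tsum_of_summable_norm h1 h2
    have h4 := (summable_mul_of_summable_norm h1 h2).hasSum
    rw [← h3, ← Complex.conj_tsum, Complex.mul_conj, Complex.normSq_eq_norm_sq] at h4
    refine h4.congr_fun fun q => ?_
    rw [map_mul, hconj, ← hmul, hbdef]; ring
  have hint : HasSum (fun q : ℤ × ℤ => ∫ y in (0:ℝ)..1, b q * zakChar n (q.1 - q.2) y)
      (∫ y in (0:ℝ)..1, ((‖∑' ξ, a ξ * zakChar n ξ y‖ ^ 2 : ℝ) : ℂ)) := by
    refine intervalIntegral.hasSum_integral_of_dominated_convergence (fun q _ => ‖b q‖) ?_ ?_ ?_ ?_ ?_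
    · exact fun q => (continuous_const.mul (hcont _)).aestronglyMeasurable
    · exact fun q => Filter.Eventually.of_forall fun y _ => by simp
    · exact Filter.Eventually.of_forall fun y _ => hb
    · exact intervalIntegrable_const
    · exact Filter.Eventually.of_forall fun y _ => hsq y
  -- Only the diagonal terms survive the integration.
  have hdiag : HasSum (fun ξ : ℤ => ((‖a ξ‖ ^ 2 : ℝ) : ℂ))
      (∫ y in (0:ℝ)..1, ((‖∑' ξ, a ξ * zakChar n ξ y‖ ^ 2 : ℝ) : ℂ)) := by
    have hinj : Function.Injective fun ξ : ℤ => (ξ, ξ) := fun x y h => (Prod.mk.inj h).1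
    rw [← hinj.hasSum_iff] at hint
    · refine hint.congr_fun fun ξ => ?_
      simp only [Function.comp, intervalIntegral.integral_const_mul, sub_self]
      rw [integral_zakChar n hn, if_pos rfl, mul_one]
      rw [hbdef, Complex.mul_conj, Complex.normSq_eq_norm_sq]
    · rintro ⟨ξ, η⟩ hq
      rw [intervalIntegral.integral_const_mul, integral_zakChar n hn, if_neg, mul_zero]
      intro h
      exact hq ⟨ξ, Prod.ext rfl (sub_eq_zero.1 h)⟩
  rw [intervalIntegral.integral_ofReal, Complex.hasSum_ofReal] at hdiag
  exact hdiag.tsum_eq.symm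

/-- Unfolding: the integral over a period of the periodization of `|f|²` is the integral over the
line. -/
lemma integral_periodization (f : SchwartzMap ℝ ℂ) :
    ∫ x in (0:ℝ)..1, ∑' ξ : ℤ, ‖f (x + ξ)‖ ^ 2 = ∫ x : ℝ, ‖f x‖ ^ 2 := by
  have hint : Integrable fun x : ℝ => ‖f x‖ ^ 2 := (f.memLp 2).integrable_norm_pow (by norm_num)
  have h1 := hint.hasSum_intervalIntegral_comp_add_int
  obtain ⟨u, hu, hub⟩ := schwartz_translate_bound f 1
  obtain ⟨K, hK⟩ : ∃ K : ℝ, ∀ v : ℝ, ‖f v‖ ≤ K := ⟨_, SchwartzMap.norm_le_seminorm ℝ f⟩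
  have hbound : ∀ (ξ : ℤ) (x : ℝ), x ∈ Set.uIoc (0:ℝ) 1 → ‖f (x + ξ)‖ ^ 2 ≤ K * u ξ := by
    intro ξ x hx
    rw [Set.uIoc_of_le zero_le_one] at hx
    have h2 := hub ξ x (abs_le.2 ⟨by linarith [hx.1], hx.2⟩)
    have h3 : ‖f (x + ξ)‖ ≤ u ξ :=
      le_trans (le_mul_of_one_le_left (norm_nonneg _) (by simp)) h2
    rw [sq]
    exact mul_le_mul (hK _) h3 (norm_nonneg _) ((norm_nonneg _).trans (hK 0))
  have h2 : HasSum (fun ξ : ℤ => ∫ x in (0:ℝ)..1, ‖f (x + ξ)‖ ^ 2)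
      (∫ x in (0:ℝ)..1, ∑' ξ : ℤ, ‖f (x + ξ)‖ ^ 2) := by
    refine intervalIntegral.hasSum_integral_of_dominated_convergence (fun ξ _ => K * u ξ)
      ?_ ?_ ?_ ?_ ?_
    · exact fun ξ => Continuous.aestronglyMeasurable (by have := f.continuous; fun_prop)
    · exact fun ξ => Filter.Eventually.of_forall fun x hx => by simpa using hbound ξ x hx
    · exact Filter.Eventually.of_forall fun x _ => hu.mul_left K
    · exact intervalIntegrable_const
    · exact Filter.Eventually.of_forall fun x hx =>
        (Summable.of_nonneg_of_le (fun _ => by positivity) (fun ξ => hbound ξ x hx)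
          (hu.mul_left K)).hasSum
  exact h2.unique h1

/-- for Schwartz `f` and integers `k, m, n` with `n ≠ 0`, the Weil–Brezin
series `F(t,x,y,z) = Σ_{ξ∈ℤ} f(x+ξ)·e^{2πi(kt+(m+nξ)y+nz)}` converges absolutely at every
point, defines a smooth KT-periodic function, and satisfies
`∫_{[0,1]⁴} |F|² = ∫_ℝ |f|²`. -/
theorem weilBrezin_smooth_periodic_isometry
    (f : SchwartzMap ℝ ℂ) (k m n : ℤ) (hn : n ≠ 0) :
    (∀ t x y z : ℝ, Summable (fun ξ : ℤ =>
      ‖f (x + (ξ : ℝ)) *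
        Complex.exp (2 * (Real.pi : ℂ) * Complex.I *
          ((k : ℂ) * (t : ℂ) + ((m : ℂ) + (n : ℂ) * (ξ : ℂ)) * (y : ℂ) + (n : ℂ) * (z : ℂ)))‖)) ∧
    (let F : F4 := fun t x y z => ∑' ξ : ℤ,
        f (x + (ξ : ℝ)) *
          Complex.exp (2 * (Real.pi : ℂ) * Complex.I *
            ((k : ℂ) * (t : ℂ) + ((m : ℂ) + (n : ℂ) * (ξ : ℂ)) * (y : ℂ) + (n : ℂ) * (z : ℂ)))
     Smooth4 F ∧ KTPeriodic F ∧
     (∫ t in (0:ℝ)..1, ∫ x in (0:ℝ)..1, ∫ y in (0:ℝ)..1, ∫ z in (0:ℝ)..1,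
        ‖F t x y z‖ ^ 2) = ∫ x : ℝ, ‖f x‖ ^ 2) := by
  have hterm : ∀ (t x y z : ℝ) (ξ : ℤ), f (x + (ξ : ℝ)) *
        Complex.exp (2 * (Real.pi : ℂ) * Complex.I *
          ((k : ℂ) * (t : ℂ) + ((m : ℂ) + (n : ℂ) * (ξ : ℂ)) * (y : ℂ) + (n : ℂ) * (z : ℂ))) =
      Complex.exp (((2 * Real.pi * (k * t + m * y + n * z) : ℝ) : ℂ) * Complex.I) *
        (f (x + ξ) * zakChar n ξ y) := by
    intro t x y z ξ
    rw [mul_left_comm, zakChar, ← Complex.exp_add]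
    congr 2; push_cast; ring
  have hF : ∀ t x y z : ℝ, ∑' ξ : ℤ, f (x + (ξ : ℝ)) *
        Complex.exp (2 * (Real.pi : ℂ) * Complex.I *
          ((k : ℂ) * (t : ℂ) + ((m : ℂ) + (n : ℂ) * (ξ : ℂ)) * (y : ℂ) + (n : ℂ) * (z : ℂ))) =
      Complex.exp (((2 * Real.pi * (k * t + m * y + n * z) : ℝ) : ℂ) * Complex.I) *
        zak n f (x, y) := by
    intro t x y z
    simp only [hterm, zak]
    exact tsum_mul_left
  refine ⟨?_, ?_, ?_, ?_⟩
  · intro t x y z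
    simp only [hterm, norm_mul, Complex.norm_exp_ofReal_mul_I, norm_zakChar, one_mul, mul_one]
    exact schwartz_translate_summable f x
  · unfold Smooth4
    simp only [hF]
    have hz : ContDiff ℝ (⊤ : ℕ∞) (zak n f) :=
      contDiff_infty.2 fun N => contDiff_zak_nat n N f
    have h1 : ContDiff ℝ (⊤ : ℕ∞) fun p : ℝ × ℝ × ℝ × ℝ => zak n f (p.2.1, p.2.2.1) :=
      hz.comp (by fun_prop)
    have h2 : ContDiff ℝ (⊤ : ℕ∞) fun p : ℝ × ℝ × ℝ × ℝ =>
        ((2 * Real.pi * (k * p.1 + m * p.2.2.1 + n * p.2.2.2) : ℝ) : ℂ) :=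
      Complex.ofRealCLM.contDiff.comp (f := fun p : ℝ × ℝ × ℝ × ℝ =>
        2 * Real.pi * (k * p.1 + m * p.2.2.1 + n * p.2.2.2)) (by fun_prop)
    exact ((h2.mul contDiff_const).cexp).mul h1
  · intro t x y z
    -- Each translation multiplies every exponential by `e^{2πi j}` with `j` an integer.
    have hper : ∀ (w w' : ℂ) (j : ℤ), w' = w + j →
        Complex.exp (2 * (Real.pi : ℂ) * Complex.I * w') =
          Complex.exp (2 * (Real.pi : ℂ) * Complex.I * w) := by
      intro w w' j h
      refine Complex.exp_eq_exp_iff_exists_int.2 ⟨j, ?_⟩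
      rw [h]; ring
    refine ⟨?_, ?_, ?_, ?_⟩
    · refine tsum_congr fun ξ => congrArg _ (hper _ _ k ?_)
      push_cast; ring
    · -- The shear `z ↦ z + y` compensates the shift `ξ ↦ ξ + 1` of the summation index.
      refine Eq.trans ?_ ((Equiv.addRight (1 : ℤ)).tsum_eq (fun ξ : ℤ => f (x + (ξ : ℝ)) *
        Complex.exp (2 * (Real.pi : ℂ) * Complex.I *
          ((k : ℂ) * (t : ℂ) + ((m : ℂ) + (n : ℂ) * (ξ : ℂ)) * (y : ℂ) + (n : ℂ) * (z : ℂ)))))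
      refine tsum_congr fun ξ => ?_
      simp only [Equiv.coe_addRight]
      push_cast
      congr 2
      · ring_nf
      · ring
    · refine tsum_congr fun ξ => congrArg _ (hper _ _ (m + n * ξ) ?_)
      push_cast; ring
    · refine tsum_congr fun ξ => congrArg _ (hper _ _ n ?_)
      push_cast; ring
  · simp only [hF, norm_mul, Complex.norm_exp_ofReal_mul_I, one_mul,
      intervalIntegral.integral_const, sub_zero, one_smul]
    rw [← integral_periodization f]
    refine intervalIntegral.integral_congr fun x _ => ?_
    exact zak_parseval n hn (fun ξ => f (x + ξ)) (schwartz_translate_summable f x)
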